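/- Let v be a norm on ℝ^n invariant under coordinate permutations. Then d_v(X,Y) := ‖log(X^{-1/2} Y X^{-1/2})‖_v defines a metric on the set P_n of n×n positive definite Hermitian matrices, the resulting metric space (P_n, d_v) is complete, and d_v(X,Y) = d_v(I, X^{-1/2} Y X^{-1/2}) for all X, Y ∈ P_n. -/

import Mathlib

noncomputable section
open scoped Classical
open Matrix
open scoped ComplexOrder

/-- `v(λ(H))` for Hermitian `H` (junk value `0` otherwise). -/
def vnorm {n : ℕ} (v : (Fin n → ℝ) → ℝ) (H : Matrix (Fin n) (Fin n) ℂ) : ℝ :=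
  if h : H.IsHermitian then v h.eigenvalues else 0

/-- The positive semidefinite square root (junk value `0` off PSD matrices). -/
def matSqrt {n : ℕ} (X : Matrix (Fin n) (Fin n) ℂ) : Matrix (Fin n) (Fin n) ℂ :=
  if h : X.PosSemidef then
    (h.1.eigenvectorUnitary : Matrix (Fin n) (Fin n) ℂ) *
      Matrix.diagonal ((↑) ∘ Real.sqrt ∘ h.1.eigenvalues) *
      (star h.1.eigenvectorUnitary : Matrix (Fin n) (Fin n) ℂ)
  else 0

/-- The Hermitian logarithm of a positive definite matrix, via the spectral
decomposition (junk value `0` off Hermitian matrices). For positive definite `X` this is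
the unique Hermitian matrix whose exponential is `X`. -/
def mlog {n : ℕ} (X : Matrix (Fin n) (Fin n) ℂ) : Matrix (Fin n) (Fin n) ℂ :=
  if h : X.IsHermitian then
    (h.eigenvectorUnitary : Matrix (Fin n) (Fin n) ℂ) *
      Matrix.diagonal (fun i => (Real.log (h.eigenvalues i) : ℂ)) *
      (star h.eigenvectorUnitary : Matrix (Fin n) (Fin n) ℂ)
  else 0

/-- The invariant Finsler distance `d_v(X,Y) = ‖log (X^{-1/2} Y X^{-1/2})‖_v`. -/
def dv {n : ℕ} (v : (Fin n → ℝ) → ℝ) (X Y : Matrix (Fin n) (Fin n) ℂ) : ℝ :=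
  vnorm v (mlog ((matSqrt X)⁻¹ * Y * (matSqrt X)⁻¹))

/-!
`d_v X Y` is `v` of the logarithms `t` of the eigenvalues of `X⁻¹ Y`, and these are read off any
congruence reducing `X` to `1` and `Y` to `diagonal (exp t)`; symmetry, definiteness and invariance
are then visible. By Cauchy–Binet, the sum of the `k` largest entries of `t` is the maximum of
`log (det (Vᴴ Y V) / det (Vᴴ X V))` over `n × k` matrices `V` of full rank, and this quotient is
multiplicative along `X, Y, Z`. So if `r`, `s` and `t`, in decreasing order, belong to `(X, Y)`,
`(Y, Z)` and `(X, Z)`, then `t` is majorized by `r + s`: it is a convex combination of permutations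
of `r + s` (Rado), whence `v t ≤ v (r + s) ≤ v r + v s`. As `v` is equivalent to the maximum norm,
completeness may be tested on Loewner order intervals `[exp (-δ) X, exp δ X]`, which are compact.
-/

section Majorization

open Finset

theorem sum_le_sum_Iic_of_antitone {ι M : Type*} [LinearOrder ι] [LocallyFiniteOrderBot ι]
    [AddCommGroup M] [PartialOrder M] [IsOrderedAddMonoid M] {t : ι → M} (ht : Antitone t)
    {j : ι} {s : Finset ι} (hs : #s = #(Iic j)) :
    ∑ i ∈ s, t i ≤ ∑ i ∈ Iic j, t i := by
  rw [← sum_sdiff_le_sum_sdiff]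
  calc ∑ i ∈ s \ Iic j, t i
      ≤ #(s \ Iic j) • t j := sum_le_card_nsmul _ _ _ fun i hi =>
        ht (le_of_not_ge fun hij => (mem_sdiff.mp hi).2 (mem_Iic.mpr hij))
    _ = #(Iic j \ s) • t j := by rw [card_sdiff_comm hs]
    _ ≤ ∑ i ∈ Iic j \ s, t i := card_nsmul_le_sum _ _ _ fun i hi =>
        ht (mem_Iic.mp (mem_sdiff.mp hi).1)

theorem last_mul_sum_le_sum_mul {R : Type*} [Ring R] [PartialOrder R] [IsOrderedRing R] {m : ℕ}
    {w z : Fin (m + 1) → R} (hw : Antitone w) (hz : ∀ j, 0 ≤ ∑ i ∈ Iic j, z i) :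
    w (Fin.last m) * ∑ i, z i ≤ ∑ i, w i * z i := by
  induction m with
  | zero => simp
  | succ m ih =>
    have sum_Iic_castSucc (j : Fin (m + 1)) :
        ∑ i ∈ Iic j.castSucc, z i = ∑ i ∈ Iic j, z i.castSucc := by
      rw [← Fin.map_castSuccEmb_Iic, sum_map]
      rfl
    have initial := ih (hw.comp_monotone Fin.strictMono_castSucc.monotone)
      fun j => sum_Iic_castSucc j ▸ hz j.castSucc
    have initial_nonneg : 0 ≤ ∑ i : Fin (m + 1), z i.castSucc := by
      rw [← Iic_top, ← sum_Iic_castSucc]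
      exact hz _
    have last_le : w (Fin.last (m + 1)) ≤ w (Fin.last m).castSucc := hw (Fin.le_last _)
    rw [Fin.sum_univ_castSucc, Fin.sum_univ_castSucc fun i => w i * z i, mul_add]
    exact add_le_add_left ((mul_le_mul_of_nonneg_right last_le initial_nonneg).trans initial) _

/-- Majorization `x ≺ y`: the partial sums of `x` are at most those of `y`, and the totals agree.
The entries are not rearranged, so this is the usual notion for decreasing tuples only. -/
def IsMajorizedBy {n : ℕ} (x y : Fin n → ℝ) : Prop :=
  (∀ j, ∑ i ∈ Iic j, x i ≤ ∑ i ∈ Iic j, y i) ∧ ∑ i, x i = ∑ i, y i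

namespace IsMajorizedBy

variable {n : ℕ} {w x y : Fin n → ℝ}

theorem sum_mul_le_sum_mul (h : IsMajorizedBy x y) (hw : Antitone w) :
    ∑ i, w i * x i ≤ ∑ i, w i * y i := by
  rcases n with _ | m
  · simp
  · have last_mul_le := last_mul_sum_le_sum_mul (z := y - x) hw fun j => by
      simpa only [Pi.sub_apply, sum_sub_distrib, sub_nonneg] using h.1 j
    simpa only [Pi.sub_apply, sum_sub_distrib, mul_sub, h.2, sub_self, mul_zero,
      sub_nonneg] using last_mul_le

theorem sum_mul_le_sum_mul_comp_perm (h : IsMajorizedBy x y) (hx : Antitone x) (c : Fin n → ℝ) :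
    ∃ σ : Equiv.Perm (Fin n), ∑ i, c i * x i ≤ ∑ i, c i * y (σ i) := by
  set τ : Equiv.Perm (Fin n) := Tuple.sort (-c)
  have cτ_antitone : Antitone (c ∘ τ) := fun i j hij =>
    neg_le_neg_iff.mp (Tuple.monotone_sort (-c) hij)
  refine ⟨τ⁻¹, ?_⟩
  calc ∑ i, c i * x i = ∑ i, c (τ i) * x (τ i) :=
        (Equiv.sum_comp τ fun i => c i * x i).symm
    _ ≤ ∑ i, c (τ i) * x i := (cτ_antitone.monovary hx).sum_mul_comp_perm_le_sum_mul
    _ ≤ ∑ i, c (τ i) * y i := h.sum_mul_le_sum_mul cτ_antitone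
    _ = ∑ i, c i * y (τ⁻¹ i) := by
        rw [← Equiv.sum_comp τ fun i => c i * y (τ⁻¹ i)]
        simp only [Equiv.Perm.inv_def, Equiv.symm_apply_apply]

theorem mem_convexHull_range_comp_perm (h : IsMajorizedBy x y) (hx : Antitone x) :
    x ∈ convexHull ℝ (Set.range fun σ : Equiv.Perm (Fin n) => y ∘ σ) := by
  by_contra hx_notMem
  obtain ⟨φ, u, hφ_hull, hφ_x⟩ := geometric_hahn_banach_closed_point (convex_convexHull ℝ _)
    ((Set.finite_range _).isClosed_convexHull ℝ) hx_notMem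
  obtain ⟨c, hc⟩ : ∃ c : Fin n → ℝ, ∀ z, φ z = ∑ i, c i * z i :=
    ⟨_, fun z => (φ.toLinearMap.pi_apply_eq_sum_univ z).trans
      (sum_congr rfl fun _ _ => mul_comm _ _)⟩
  obtain ⟨σ, hσ⟩ := h.sum_mul_le_sum_mul_comp_perm hx c
  have φ_le : φ x ≤ φ (y ∘ σ) := by rwa [hc, hc]
  exact ((hφ_hull _ (subset_convexHull ℝ _ ⟨σ, rfl⟩)).trans hφ_x).not_ge φ_le

theorem le_of_convexOn {g : (Fin n → ℝ) → ℝ} (h : IsMajorizedBy x y) (hx : Antitone x)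
    (hg : ConvexOn ℝ Set.univ g)
    (hg_perm : ∀ (σ : Equiv.Perm (Fin n)) (x : Fin n → ℝ), g (x ∘ σ) = g x) : g x ≤ g y := by
  obtain ⟨_, ⟨σ, rfl⟩, hσ⟩ := hg.exists_ge_of_mem_convexHull (Set.subset_univ _)
    (h.mem_convexHull_range_comp_perm hx)
  exact hσ.trans_eq (hg_perm σ y)

end IsMajorizedBy

end Majorization

section CauchyBinet

variable {ι κ : Type*} [Fintype ι] [Fintype κ] [DecidableEq κ]

theorem det_mul_eq_sum_prod_mul_det_submatrix {R : Type*} [CommRing R]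
    (A : Matrix κ ι R) (B : Matrix ι κ R) :
    (A * B).det = ∑ f : κ → ι, (∏ i, A i (f i)) * (B.submatrix f id).det := by
  have rows : A * B = fun i => ∑ j, A i j • B j := by
    ext i k
    simp [Matrix.mul_apply]
  calc (A * B).det
      = detRowAlternating.toMultilinearMap fun i => ∑ j, A i j • B j := congrArg det rows
    _ = ∑ f : κ → ι, detRowAlternating.toMultilinearMap fun i => A i (f i) • B (f i) :=
        MultilinearMap.map_sum _ _
    _ = ∑ f : κ → ι, (∏ i, A i (f i)) * (B.submatrix f id).det :=
        Finset.sum_congr rfl fun f _ => MultilinearMap.map_smul_univ _ _ _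

-- Every minor is counted `(card κ)!` times, once for each ordering of its index set; this form
-- needs no linear order on `ι`.
theorem sum_det_submatrix_mul_det_submatrix {R : Type*} [CommRing R]
    (A : Matrix κ ι R) (B : Matrix ι κ R) :
    ∑ f : κ → ι, (A.submatrix id f).det * (B.submatrix f id).det =
      ((Fintype.card κ).factorial : R) * (A * B).det := by
  have permuted (σ : Equiv.Perm κ) : (A * B).det = ∑ f : κ → ι,
      (Equiv.Perm.sign σ : R) * (∏ i, A i (f (σ i))) * (B.submatrix f id).det := by
    rw [det_mul_eq_sum_prod_mul_det_submatrix, ← (σ.arrowCongr (Equiv.refl ι)).symm.sum_comp]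
    refine Finset.sum_congr rfl fun f _ => ?_
    calc (∏ i, A i (f (σ i))) * ((B.submatrix f id).submatrix σ id).det
        = (∏ i, A i (f (σ i))) * (Equiv.Perm.sign σ * (B.submatrix f id).det) := by
          rw [det_permute]
      _ = _ := by ring
  calc ∑ f : κ → ι, (A.submatrix id f).det * (B.submatrix f id).det
      = ∑ f : κ → ι, ∑ σ : Equiv.Perm κ,
          (Equiv.Perm.sign σ : R) * (∏ i, A i (f (σ i))) * (B.submatrix f id).det := by
        refine Finset.sum_congr rfl fun f _ => ?_
        rw [← Finset.sum_mul, ← det_transpose, det_apply']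
        rfl
    _ = ∑ _σ : Equiv.Perm κ, (A * B).det := by
        rw [Finset.sum_comm]
        exact Finset.sum_congr rfl fun σ _ => (permuted σ).symm
    _ = ((Fintype.card κ).factorial : R) * (A * B).det := by
        rw [Finset.sum_const, Finset.card_univ, Fintype.card_perm, nsmul_eq_mul]

theorem det_conjTranspose_mul_diagonal_mul_le {𝕜 : Type*} [RCLike 𝕜] [DecidableEq ι]
    {d : ι → ℝ} {c : ℝ} (hd : ∀ f : κ → ι, f.Injective → ∏ i, d (f i) ≤ c) (V : Matrix ι κ 𝕜) :
    (Vᴴ * diagonal (fun i => (d i : 𝕜)) * V).det ≤ (c : 𝕜) * (Vᴴ * V).det := by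
  have factorial_pos : (0 : 𝕜) < ((Fintype.card κ).factorial : 𝕜) := by
    exact_mod_cast (Fintype.card κ).factorial_pos
  refine le_of_mul_le_mul_left ?_ factorial_pos
  rw [mul_left_comm, ← sum_det_submatrix_mul_det_submatrix, ← sum_det_submatrix_mul_det_submatrix,
    Finset.mul_sum]
  refine Finset.sum_le_sum fun f _ => ?_
  have weighted_minor : ((Vᴴ * diagonal fun i => (d i : 𝕜)).submatrix id f).det =
      ((∏ i, d (f i) : ℝ) : 𝕜) * (Vᴴ.submatrix id f).det := by
    have columns : (Vᴴ * diagonal fun i => (d i : 𝕜)).submatrix id f =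
        Matrix.of fun i j => (d (f j) : 𝕜) * Vᴴ.submatrix id f i j := by
      ext i j
      simp [mul_comm]
    rw [columns, det_mul_row]
    push_cast
    rfl
  have minor_nonneg : 0 ≤ (Vᴴ.submatrix id f).det * (V.submatrix f id).det := by
    rw [← conjTranspose_submatrix, det_conjTranspose]
    exact star_mul_self_nonneg _
  rw [weighted_minor, mul_assoc]
  by_cases hf : f.Injective
  · exact mul_le_mul_of_nonneg_right (by exact_mod_cast hd f hf) minor_nonneg
  · obtain ⟨i, j, hij, hne⟩ := Function.not_injective_iff.mp hf
    have minor_eq_zero : (V.submatrix f id).det = 0 :=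
      det_zero_of_row_eq hne (funext fun k => congrArg (V · k) hij)
    simp only [minor_eq_zero, mul_zero, le_refl]

end CauchyBinet

section RelativeLogSpectrum

/-- A congruence `T` reduces `X` to the identity and `Y` to `diagonal (exp t)`; for positive
definite `X` this says that `t` lists the logarithms of the eigenvalues of `X⁻¹ Y`. -/
def HasRelativeLogSpectrum {ι 𝕜 : Type*} [Fintype ι] [DecidableEq ι] [RCLike 𝕜]
    (X Y : Matrix ι ι 𝕜) (t : ι → ℝ) : Prop :=
  ∃ T : Matrix ι ι 𝕜, Tᴴ * X * T = 1 ∧ Tᴴ * Y * T = diagonal fun i => (Real.exp (t i) : 𝕜)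

namespace HasRelativeLogSpectrum

variable {ι κ 𝕜 : Type*} [Fintype ι] [DecidableEq ι] [Fintype κ] [RCLike 𝕜]
  {X Y Z : Matrix ι ι 𝕜} {r s t : ι → ℝ}

theorem exists_isUnit (h : HasRelativeLogSpectrum X Y t) :
    ∃ T : Matrix ι ι 𝕜, IsUnit T ∧ Tᴴ * X * T = 1 ∧
      Tᴴ * Y * T = diagonal fun i => (Real.exp (t i) : 𝕜) := by
  obtain ⟨T, hX, hY⟩ := h
  exact ⟨T, IsUnit.of_mul_eq_one_right _ hX, hX, hY⟩

theorem posDef_right (h : HasRelativeLogSpectrum X Y t) : Y.PosDef := by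
  obtain ⟨T, hT, -, hY⟩ := h.exists_isUnit
  rw [← hT.posDef_star_left_conjugate_iff, star_eq_conjTranspose, hY]
  exact posDef_diagonal_iff.mpr fun i => by exact_mod_cast Real.exp_pos (t i)

theorem symm (h : HasRelativeLogSpectrum X Y t) : HasRelativeLogSpectrum Y X (-t) := by
  obtain ⟨T, hX, hY⟩ := h
  set D : Matrix ι ι 𝕜 := diagonal fun i => (Real.exp (-t i / 2) : 𝕜)
  have conjugated (Z : Matrix ι ι 𝕜) : (T * D)ᴴ * Z * (T * D) = D * (Tᴴ * Z * T) * D := by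
    have D_herm : Dᴴ = D := by simp [D, diagonal_conjTranspose, Pi.star_def]
    simp only [conjTranspose_mul, D_herm, Matrix.mul_assoc]
  refine ⟨T * D, ?_, ?_⟩
  · rw [conjugated, hY, diagonal_mul_diagonal, diagonal_mul_diagonal, ← diagonal_one]
    congr 1
    ext i
    norm_cast
    rw [← Real.exp_add, ← Real.exp_add, show -t i / 2 + t i + -t i / 2 = 0 by ring, Real.exp_zero]
  · rw [conjugated, hX, Matrix.mul_one, diagonal_mul_diagonal]
    congr 1
    ext i
    norm_cast
    rw [← Real.exp_add, add_halves, Pi.neg_apply]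

theorem posDef_left (h : HasRelativeLogSpectrum X Y t) : X.PosDef :=
  h.symm.posDef_right

theorem comp_perm (h : HasRelativeLogSpectrum X Y t) (σ : Equiv.Perm ι) :
    HasRelativeLogSpectrum X Y (t ∘ σ) := by
  obtain ⟨T, hX, hY⟩ := h
  have reindexed (Z : Matrix ι ι 𝕜) :
      (T.submatrix id σ)ᴴ * Z * T.submatrix id σ = (Tᴴ * Z * T).submatrix σ σ := rfl
  refine ⟨T.submatrix id σ, ?_, ?_⟩
  · rw [reindexed, hX, submatrix_one_equiv]
  · rw [reindexed, hY, submatrix_diagonal_equiv]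
    rfl

open scoped MatrixOrder in
theorem exists_of_posDef (hX : X.PosDef) (hY : Y.PosDef) :
    ∃ t, HasRelativeLogSpectrum X Y t := by
  obtain ⟨B, rfl⟩ : ∃ B, X = star B * B :=
    CStarAlgebra.nonneg_iff_eq_star_mul_self.mp hX.posSemidef.nonneg
  have hB : IsUnit B := isUnit_of_mul_isUnit_right hX.isUnit
  have hB_inv : IsUnit B⁻¹ := (isUnit_nonsing_inv_iff).mpr hB
  have hA : (star B⁻¹ * Y * B⁻¹).PosDef := hB_inv.posDef_star_left_conjugate_iff.mpr hY
  set U : Matrix ι ι 𝕜 := (hA.1.eigenvectorUnitary : Matrix ι ι 𝕜)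
  refine ⟨fun i => Real.log (hA.1.eigenvalues i), B⁻¹ * U, ?_, ?_⟩
  · calc (B⁻¹ * U)ᴴ * (star B * B) * (B⁻¹ * U)
        = star U * star (B * B⁻¹) * (B * B⁻¹) * U := by
          simp only [← star_eq_conjTranspose, star_mul, Matrix.mul_assoc]
      _ = 1 := by
          rw [mul_nonsing_inv B ((isUnit_iff_isUnit_det B).mp hB), star_one, Matrix.mul_one,
            Matrix.mul_one]
          exact Unitary.coe_star_mul_self _
  · calc (B⁻¹ * U)ᴴ * Y * (B⁻¹ * U)
        = star U * (star B⁻¹ * Y * B⁻¹) * U := by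
          simp only [← star_eq_conjTranspose, star_mul, Matrix.mul_assoc]
      _ = diagonal (RCLike.ofReal ∘ hA.1.eigenvalues) := by
          simpa only [Unitary.conjStarAlgAut_star_apply] using
            hA.1.conjStarAlgAut_star_eigenvectorUnitary
      _ = diagonal fun i => (Real.exp (Real.log (hA.1.eigenvalues i)) : 𝕜) := by
          congr 1
          ext i
          simp only [Function.comp_apply, Real.exp_log (hA.eigenvalues_pos i)]

theorem eq_zero_iff (h : HasRelativeLogSpectrum X Y t) : t = 0 ↔ X = Y := by
  obtain ⟨T, hT, hX, hY⟩ := h.exists_isUnit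
  have cancel : Tᴴ * X * T = Tᴴ * Y * T ↔ X = Y := by
    rw [hT.mul_left_inj, ← star_eq_conjTranspose, hT.star.mul_right_inj]
  rw [← cancel, hX, hY, ← diagonal_one, diagonal_injective.eq_iff, funext_iff, funext_iff]
  refine forall_congr' fun i => ?_
  norm_cast
  rw [@eq_comm ℝ 1, Real.exp_eq_one_iff, Pi.zero_apply]

theorem of_conj {S : Matrix ι ι 𝕜}
    (h : HasRelativeLogSpectrum (Sᴴ * X * S) (Sᴴ * Y * S) t) : HasRelativeLogSpectrum X Y t := by
  obtain ⟨T, hX, hY⟩ := h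
  exact ⟨S * T, by simpa only [conjTranspose_mul, Matrix.mul_assoc] using hX,
    by simpa only [conjTranspose_mul, Matrix.mul_assoc] using hY⟩

theorem det_conj_le [DecidableEq κ] (h : HasRelativeLogSpectrum X Y t) {R : ℝ}
    (hR : ∀ f : κ → ι, f.Injective → ∑ i, t (f i) ≤ R) (V : Matrix ι κ 𝕜) :
    (Vᴴ * Y * V).det ≤ (Real.exp R : 𝕜) * (Vᴴ * X * V).det := by
  obtain ⟨T, hT, hX, hY⟩ := h.exists_isUnit
  have cancel : T * (T⁻¹ * V) = V :=
    mul_nonsing_inv_cancel_left _ _ ((isUnit_iff_isUnit_det T).mp hT)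
  have conjugated (Z : Matrix ι ι 𝕜) :
      Vᴴ * Z * V = (T⁻¹ * V)ᴴ * (Tᴴ * Z * T) * (T⁻¹ * V) := by
    nth_rw 1 2 [← cancel]
    simp only [conjTranspose_mul T, Matrix.mul_assoc]
  rw [conjugated Y, conjugated X, hX, hY, Matrix.mul_one]
  refine det_conjTranspose_mul_diagonal_mul_le (fun f hf => ?_) _
  rw [← Real.exp_sum]
  exact Real.exp_le_exp.mpr (hR f hf)

theorem exists_det_conj_eq [DecidableEq κ] (h : HasRelativeLogSpectrum X Y t) {e : κ → ι}
    (he : e.Injective) :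
    ∃ V : Matrix ι κ 𝕜, (Vᴴ * X * V).det = 1 ∧
      (Vᴴ * Y * V).det = (Real.exp (∑ i, t (e i)) : 𝕜) := by
  obtain ⟨T, hX, hY⟩ := h
  have reindexed (Z : Matrix ι ι 𝕜) :
      (T.submatrix id e)ᴴ * Z * T.submatrix id e = (Tᴴ * Z * T).submatrix e e := rfl
  refine ⟨T.submatrix id e, ?_, ?_⟩
  · rw [reindexed, hX, submatrix_one e he, det_one]
  · rw [reindexed, hY, submatrix_diagonal _ e he, det_diagonal, Real.exp_sum]
    push_cast
    rfl

theorem sum_le_add (hXY : HasRelativeLogSpectrum X Y r) (hYZ : HasRelativeLogSpectrum Y Z s)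
    (hXZ : HasRelativeLogSpectrum X Z t) {R S : ℝ}
    (hR : ∀ f : κ → ι, f.Injective → ∑ i, r (f i) ≤ R)
    (hS : ∀ f : κ → ι, f.Injective → ∑ i, s (f i) ≤ S) {e : κ → ι} (he : e.Injective) :
    ∑ i, t (e i) ≤ R + S := by
  obtain ⟨V, hVX, hVZ⟩ := hXZ.exists_det_conj_eq he
  have chain : (Real.exp (∑ i, t (e i)) : 𝕜) ≤ (Real.exp (R + S) : 𝕜) :=
    calc (Real.exp (∑ i, t (e i)) : 𝕜)
        = (Vᴴ * Z * V).det := hVZ.symm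
      _ ≤ (Real.exp S : 𝕜) * (Vᴴ * Y * V).det := hYZ.det_conj_le hS V
      _ ≤ (Real.exp S : 𝕜) * ((Real.exp R : 𝕜) * (Vᴴ * X * V).det) :=
          mul_le_mul_of_nonneg_left (hXY.det_conj_le hR V) (by exact_mod_cast (Real.exp_pos S).le)
      _ = (Real.exp (R + S) : 𝕜) := by
          rw [hVX, mul_one, add_comm, Real.exp_add]
          push_cast
          rfl
  exact Real.exp_le_exp.mp (by exact_mod_cast chain)

theorem sum_eq_add (hXY : HasRelativeLogSpectrum X Y r) (hYZ : HasRelativeLogSpectrum Y Z s)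
    (hXZ : HasRelativeLogSpectrum X Z t) : ∑ i, t i = ∑ i, r i + ∑ i, s i := by
  have sum_comp_le (w : ι → ℝ) (f : ι → ι) (hf : f.Injective) : ∑ i, w (f i) ≤ ∑ i, w i :=
    (Equiv.sum_comp (Equiv.ofBijective f (Finite.injective_iff_bijective.mp hf)) w).le
  refine le_antisymm
    (hXY.sum_le_add hYZ hXZ (sum_comp_le r) (sum_comp_le s) Function.injective_id) ?_
  have neg_sum_le := hYZ.symm.sum_le_add hXY.symm hXZ.symm (sum_comp_le _) (sum_comp_le _)
    Function.injective_id
  simp only [Pi.neg_apply, Finset.sum_neg_distrib, id_eq] at neg_sum_le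
  linarith

section Ordered

variable {n : ℕ} {X Y Z : Matrix (Fin n) (Fin n) 𝕜} {r s t : Fin n → ℝ}

theorem exists_antitone (hX : X.PosDef) (hY : Y.PosDef) :
    ∃ t, Antitone t ∧ HasRelativeLogSpectrum X Y t := by
  obtain ⟨t, ht⟩ := exists_of_posDef hX hY
  exact ⟨_, fun i j hij => neg_le_neg_iff.mp (Tuple.monotone_sort (-t) hij),
    ht.comp_perm (Tuple.sort (-t))⟩

theorem isMajorizedBy_add (hXY : HasRelativeLogSpectrum X Y r)
    (hYZ : HasRelativeLogSpectrum Y Z s) (hXZ : HasRelativeLogSpectrum X Z t)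
    (hr : Antitone r) (hs : Antitone s) : IsMajorizedBy t (r + s) := by
  refine ⟨fun j => ?_, (hXY.sum_eq_add hYZ hXZ).trans Finset.sum_add_distrib.symm⟩
  have sum_comp_le {w : Fin n → ℝ} (hw : Antitone w) (f : Finset.Iic j → Fin n)
      (hf : f.Injective) : ∑ i, w (f i) ≤ ∑ i ∈ Finset.Iic j, w i := by
    rw [← Finset.sum_image (s := Finset.univ) (g := f) hf.injOn]
    refine sum_le_sum_Iic_of_antitone hw ?_
    rw [Finset.card_image_of_injective _ hf, Finset.card_univ, Fintype.card_coe]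
  have partial_sum_le :=
    hXY.sum_le_add hYZ hXZ (sum_comp_le hr) (sum_comp_le hs) Subtype.val_injective
  simpa only [Pi.add_apply, Finset.sum_add_distrib, Finset.sum_coe_sort _ t] using
    partial_sum_le

end Ordered

end HasRelativeLogSpectrum

end RelativeLogSpectrum

section Distance

theorem exists_perm_comp_eq_of_map_univ_eq {ι α : Type*} [Fintype ι] {a b : ι → α}
    (h : Finset.univ.val.map a = Finset.univ.val.map b) : ∃ σ : Equiv.Perm ι, a = b ∘ σ := by
  have fibers (c : α) : Nonempty ({i // a i = c} ≃ {i // b i = c}) := by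
    have count_eq := congrArg (Multiset.count c) h
    rw [Multiset.count_map, Multiset.count_map] at count_eq
    rw [← Fintype.card_eq, Fintype.card_subtype, Fintype.card_subtype]
    simpa only [Finset.card_def, Finset.filter_val, eq_comm] using count_eq
  exact ⟨Equiv.ofFiberEquiv fun c => (fibers c).some,
    funext fun i => (Equiv.ofFiberEquiv_map _ i).symm⟩

open Polynomial in
theorem exists_perm_comp_eq_of_prod_X_sub_C_eq {ι R : Type*} [Fintype ι] [CommRing R] [IsDomain R]
    {a b : ι → R} (h : ∏ i, (X - C (a i)) = ∏ i, (X - C (b i))) :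
    ∃ σ : Equiv.Perm ι, a = b ∘ σ := by
  have roots_eq (c : ι → R) : (∏ i, (X - C (c i))).roots = Finset.univ.val.map c := by
    rw [← roots_multiset_prod_X_sub_C (Finset.univ.val.map c), Multiset.map_map]
    rfl
  exact exists_perm_comp_eq_of_map_univ_eq (by rw [← roots_eq a, h, roots_eq b])

open Polynomial in
theorem exists_perm_eigenvalues_eq {ι 𝕜 : Type*} [Fintype ι] [DecidableEq ι] [RCLike 𝕜]
    {A : Matrix ι ι 𝕜} (hA : A.IsHermitian) {t : ι → ℝ}
    (h : A.charpoly = ∏ i, (X - C (t i : 𝕜))) : ∃ σ : Equiv.Perm ι, hA.eigenvalues = t ∘ σ := by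
  obtain ⟨σ, hσ⟩ := exists_perm_comp_eq_of_prod_X_sub_C_eq (hA.charpoly_eq.symm.trans h)
  exact ⟨σ, funext fun i => RCLike.ofReal_injective (congrFun hσ i)⟩

variable {n : ℕ} {X Y Z : Matrix (Fin n) (Fin n) ℂ}

theorem matSqrt_eq_cfc (hX : X.PosSemidef) : matSqrt X = cfc Real.sqrt X := by
  rw [matSqrt, dif_pos hX, hX.1.cfc_eq]
  rfl

theorem mlog_eq_cfc (hX : X.IsHermitian) : mlog X = cfc Real.log X := by
  rw [mlog, dif_pos hX, hX.cfc_eq]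
  rfl

open scoped MatrixOrder in
theorem matSqrt_eq_sqrt (hX : X.PosSemidef) : matSqrt X = CFC.sqrt X := by
  rw [matSqrt_eq_cfc hX, CFC.sqrt_eq_real_sqrt X hX.nonneg, cfcₙ_eq_cfc]

open scoped MatrixOrder in
theorem matSqrt_mul_self (hX : X.PosSemidef) : matSqrt X * matSqrt X = X := by
  rw [matSqrt_eq_sqrt hX, CFC.sqrt_mul_sqrt_self X hX.nonneg]

open scoped MatrixOrder in
theorem matSqrt_posDef (hX : X.PosDef) : (matSqrt X).PosDef := by
  rw [matSqrt_eq_sqrt hX.posSemidef]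
  exact hX.isStrictlyPositive.sqrt.posDef

theorem inv_matSqrt_mul_self_mul_inv_matSqrt (hX : X.PosDef) :
    (matSqrt X)⁻¹ * X * (matSqrt X)⁻¹ = 1 := by
  have det_unit := (isUnit_iff_isUnit_det _).mp (matSqrt_posDef hX).isUnit
  nth_rw 2 [← matSqrt_mul_self hX.posSemidef]
  rw [nonsing_inv_mul_cancel_left _ _ det_unit, mul_nonsing_inv _ det_unit]

theorem posDef_inv_matSqrt_conj (hX : X.PosDef) (hY : Y.PosDef) :
    ((matSqrt X)⁻¹ * Y * (matSqrt X)⁻¹).PosDef := by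
  have hS := (matSqrt_posDef hX).inv
  have conj_posDef := (hS.isUnit.posDef_star_left_conjugate_iff).mpr hY
  rwa [star_eq_conjTranspose, hS.1.eq] at conj_posDef

open Polynomial in
theorem HasRelativeLogSpectrum.charpoly_inv_matSqrt_conj {t : Fin n → ℝ}
    (h : HasRelativeLogSpectrum X Y t) :
    ((matSqrt X)⁻¹ * Y * (matSqrt X)⁻¹).charpoly =
      ∏ i, (Polynomial.X - C ((Real.exp (t i) : ℝ) : ℂ)) := by
  obtain ⟨T, hT, hTX, hTY⟩ := h.exists_isUnit
  have inv_eq : X⁻¹ = T * Tᴴ := by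
    refine inv_eq_left_inv (hT.mul_right_cancel ?_)
    rw [Matrix.mul_assoc, Matrix.mul_assoc, ← Matrix.mul_assoc Tᴴ, hTX, Matrix.mul_one,
      Matrix.one_mul]
  calc ((matSqrt X)⁻¹ * Y * (matSqrt X)⁻¹).charpoly
      = ((matSqrt X * matSqrt X)⁻¹ * Y).charpoly := by
        rw [charpoly_mul_comm, ← Matrix.mul_assoc, Matrix.mul_inv_rev]
    _ = (T * (Tᴴ * Y)).charpoly := by
        rw [matSqrt_mul_self h.posDef_left.posSemidef, inv_eq, Matrix.mul_assoc]
    _ = (Tᴴ * Y * T).charpoly := charpoly_mul_comm _ _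
    _ = ∏ i, (Polynomial.X - C ((Real.exp (t i) : ℝ) : ℂ)) := by
        rw [hTY, charpoly_diagonal]
        rfl

theorem HasRelativeLogSpectrum.dv_eq {v : (Fin n → ℝ) → ℝ} {t : Fin n → ℝ}
    (hv : ∀ (σ : Equiv.Perm (Fin n)) (x : Fin n → ℝ), v (x ∘ σ) = v x)
    (h : HasRelativeLogSpectrum X Y t) : dv v X Y = v t := by
  set A := (matSqrt X)⁻¹ * Y * (matSqrt X)⁻¹
  have A_herm : A.IsHermitian := (posDef_inv_matSqrt_conj h.posDef_left h.posDef_right).1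
  obtain ⟨σ, hσ⟩ := exists_perm_eigenvalues_eq (t := fun i => Real.exp (t i)) A_herm
    (h.charpoly_inv_matSqrt_conj)
  have log_eigenvalues (i : Fin n) : Real.log (A_herm.eigenvalues i) = (t ∘ σ) i := by
    rw [hσ, Function.comp_apply, Function.comp_apply, Real.log_exp]
  have log_herm : (mlog A).IsHermitian := mlog_eq_cfc A_herm ▸ cfc_predicate _ _
  obtain ⟨τ, hτ⟩ := exists_perm_eigenvalues_eq (t := t ∘ σ) log_herm (by
    simp only [mlog_eq_cfc A_herm, A_herm.charpoly_cfc_eq, log_eigenvalues])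
  calc dv v X Y = v log_herm.eigenvalues := dif_pos log_herm
    _ = v t := by rw [hτ, hv, hv]

theorem dv_eq_dv_one {v : (Fin n → ℝ) → ℝ}
    (hv : ∀ (σ : Equiv.Perm (Fin n)) (x : Fin n → ℝ), v (x ∘ σ) = v x)
    (hX : X.PosDef) (hY : Y.PosDef) :
    dv v X Y = dv v 1 ((matSqrt X)⁻¹ * Y * (matSqrt X)⁻¹) := by
  obtain ⟨t, ht⟩ :=
    HasRelativeLogSpectrum.exists_of_posDef PosDef.one (posDef_inv_matSqrt_conj hX hY)
  have hXY : HasRelativeLogSpectrum X Y t := by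
    refine HasRelativeLogSpectrum.of_conj (S := (matSqrt X)⁻¹) ?_
    rwa [(matSqrt_posDef hX).inv.1.eq, inv_matSqrt_mul_self_mul_inv_matSqrt hX]
  rw [hXY.dv_eq hv, ht.dv_eq hv]

theorem dv_comm {p : Seminorm ℝ (Fin n → ℝ)}
    (hp : ∀ (σ : Equiv.Perm (Fin n)) (x : Fin n → ℝ), p (x ∘ σ) = p x)
    (hX : X.PosDef) (hY : Y.PosDef) : dv p X Y = dv p Y X := by
  obtain ⟨t, ht⟩ := HasRelativeLogSpectrum.exists_of_posDef hX hY
  rw [ht.dv_eq hp, ht.symm.dv_eq hp, map_neg_eq_map]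

theorem dv_eq_zero_iff {v : (Fin n → ℝ) → ℝ} (hv_eq0 : ∀ x, v x = 0 ↔ x = 0)
    (hv : ∀ (σ : Equiv.Perm (Fin n)) (x : Fin n → ℝ), v (x ∘ σ) = v x)
    (hX : X.PosDef) (hY : Y.PosDef) : dv v X Y = 0 ↔ X = Y := by
  obtain ⟨t, ht⟩ := HasRelativeLogSpectrum.exists_of_posDef hX hY
  rw [ht.dv_eq hv, hv_eq0, ht.eq_zero_iff]

theorem dv_triangle {p : Seminorm ℝ (Fin n → ℝ)}
    (hp : ∀ (σ : Equiv.Perm (Fin n)) (x : Fin n → ℝ), p (x ∘ σ) = p x)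
    (hX : X.PosDef) (hY : Y.PosDef) (hZ : Z.PosDef) : dv p X Z ≤ dv p X Y + dv p Y Z := by
  obtain ⟨r, hr, hXY⟩ := HasRelativeLogSpectrum.exists_antitone hX hY
  obtain ⟨s, hs, hYZ⟩ := HasRelativeLogSpectrum.exists_antitone hY hZ
  obtain ⟨t, ht, hXZ⟩ := HasRelativeLogSpectrum.exists_antitone hX hZ
  rw [hXY.dv_eq hp, hYZ.dv_eq hp, hXZ.dv_eq hp]
  calc p t ≤ p (r + s) :=
        (hXY.isMajorizedBy_add hYZ hXZ hr hs).le_of_convexOn ht p.convexOn hp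
    _ ≤ p r + p s := map_add_le_add p r s

end Distance

section Completeness

open Filter Topology

theorem exists_seminorm_le_mul_norm_and_norm_le_mul_seminorm {E : Type*} [NormedAddCommGroup E]
    [NormedSpace ℝ E] [FiniteDimensional ℝ E] {p : Seminorm ℝ E} (hp : ∀ x, p x = 0 → x = 0) :
    ∃ C > 0, ∀ x, p x ≤ C * ‖x‖ ∧ ‖x‖ ≤ C * p x := by
  have p_continuous : Continuous p :=
    continuousOn_univ.mp (p.convexOn.continuousOn isOpen_univ)
  obtain ⟨A, A_pos, hA⟩ := p.bound_of_continuous_normedSpace p_continuous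
  have pos_on_sphere : ∀ x ∈ Metric.sphere (0 : E) 1, 0 < p x := fun x hx =>
    (apply_nonneg p x).lt_of_ne' fun h0 =>
      Metric.ne_of_mem_sphere hx one_ne_zero (hp x h0)
  obtain ⟨a, a_pos, ha⟩ := (isCompact_sphere (0 : E) 1).exists_forall_le'
    p_continuous.continuousOn pos_on_sphere
  refine ⟨max A a⁻¹, lt_max_of_lt_left A_pos, fun x => ⟨?_, ?_⟩⟩
  · exact (hA x).trans (mul_le_mul_of_nonneg_right (le_max_left _ _) (norm_nonneg x))
  · refine le_trans ?_ (mul_le_mul_of_nonneg_right (le_max_right A a⁻¹) (apply_nonneg p x))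
    rcases eq_or_ne x 0 with rfl | hx
    · simp
    · have unit_mem : ‖x‖⁻¹ • x ∈ Metric.sphere (0 : E) 1 := by
        rw [mem_sphere_zero_iff_norm, norm_smul, norm_inv, norm_norm,
          inv_mul_cancel₀ (norm_ne_zero_iff.mpr hx)]
      have le_normalized := ha _ unit_mem
      rw [map_smul_eq_mul, norm_inv, norm_norm,
        le_inv_mul_iff₀ (norm_pos_iff.mpr hx)] at le_normalized
      rwa [le_inv_mul_iff₀ a_pos, mul_comm]

open scoped MatrixOrder Matrix.Norms.L2Operator

variable {ι 𝕜 : Type*} [RCLike 𝕜] {X Y : Matrix ι ι 𝕜} {δ : ℝ}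

/-- The closed ball of radius `δ` about `X` for Thompson's part metric, described through the
Loewner order as the interval `exp (-δ) X ≤ Y ≤ exp δ X`. -/
def thompsonBall (X : Matrix ι ι 𝕜) (δ : ℝ) : Set (Matrix ι ι 𝕜) :=
  Set.Icc (Real.exp (-δ) • X) (Real.exp δ • X)

theorem HasRelativeLogSpectrum.mem_thompsonBall_iff [Fintype ι] [DecidableEq ι] {t : ι → ℝ}
    (h : HasRelativeLogSpectrum X Y t) (hδ : 0 ≤ δ) : Y ∈ thompsonBall X δ ↔ ‖t‖ ≤ δ := by
  obtain ⟨T, hT, hX, hY⟩ := h.exists_isUnit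
  have conj_le_iff (A B : Matrix ι ι 𝕜) : A ≤ B ↔ Tᴴ * A * T ≤ Tᴴ * B * T := by
    rw [← sub_nonneg, ← hT.star_left_conjugate_nonneg_iff, ← sub_nonneg (a := Tᴴ * B * T),
      star_eq_conjTranspose, Matrix.mul_sub, Matrix.sub_mul]
  have diagonal_le_iff (a b : ι → ℝ) :
      (diagonal fun i => (a i : 𝕜)) ≤ (diagonal fun i => (b i : 𝕜)) ↔ ∀ i, a i ≤ b i := by
    rw [Matrix.le_iff, diagonal_sub, posSemidef_diagonal_iff]
    exact forall_congr' fun i => by rw [sub_nonneg]; norm_cast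
  have conj_smul (c : ℝ) : Tᴴ * (c • X) * T = diagonal fun _ => (c : 𝕜) := by
    rw [Matrix.mul_smul, Matrix.smul_mul, hX, ← diagonal_one, ← diagonal_smul]
    exact congrArg diagonal
      (funext fun _ => (RCLike.real_smul_eq_coe_mul c 1).trans (mul_one _))
  rw [thompsonBall, Set.mem_Icc, conj_le_iff, conj_le_iff Y, conj_smul, conj_smul, hY,
    pi_norm_le_iff_of_nonneg hδ]
  rw [diagonal_le_iff, diagonal_le_iff]
  simp only [Real.exp_le_exp, Real.norm_eq_abs, abs_le, forall_and]

theorem posDef_of_mem_thompsonBall (hX : X.PosDef) (hY : Y ∈ thompsonBall X δ) : Y.PosDef := by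
  have sum_posDef := (hX.smul (Real.exp_pos (-δ))).add_posSemidef (Matrix.le_iff.mp hY.1)
  rwa [add_sub_cancel] at sum_posDef

variable [Finite ι]

theorem isCompact_Icc_matrix (A B : Matrix ι ι ℂ) : IsCompact (Set.Icc A B) := by
  have := Fintype.ofFinite ι
  have := FiniteDimensional.proper ℂ (Matrix ι ι ℂ)
  refine Metric.isCompact_of_isClosed_isBounded isClosed_Icc
    ((Metric.isBounded_closedBall (x := A) (r := ‖B - A‖)).subset fun Y hY => ?_)
  rw [mem_closedBall_iff_norm]
  exact CStarAlgebra.norm_le_norm_of_nonneg_of_le (sub_nonneg.mpr hY.1)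
    (sub_le_sub_right hY.2 A)

theorem exists_posDef_thompson_limit {u : ℕ → Matrix ι ι ℂ} (hu : ∀ k, (u k).PosDef)
    (cauchy : ∀ ε > 0, ∃ N, ∀ k ≥ N, ∀ l ≥ N, u l ∈ thompsonBall (u k) ε) :
    ∃ L : Matrix ι ι ℂ, L.PosDef ∧ ∀ ε > 0, ∃ N, ∀ k ≥ N, L ∈ thompsonBall (u k) ε := by
  have := Fintype.ofFinite ι
  obtain ⟨N₁, hN₁⟩ := cauchy 1 one_pos
  obtain ⟨L, hL, φ, φ_mono, hφ⟩ := (isCompact_Icc_matrix _ _).tendsto_subseq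
    fun k => hN₁ N₁ le_rfl (N₁ + k) (Nat.le_add_right _ _)
  refine ⟨L, posDef_of_mem_thompsonBall (hu N₁) hL, fun ε hε => ?_⟩
  obtain ⟨N, hN⟩ := cauchy ε hε
  refine ⟨N, fun k hk => isClosed_Icc.mem_of_tendsto hφ ?_⟩
  filter_upwards [eventually_ge_atTop N] with j hj
  exact hN k hk _ (hj.trans ((φ_mono.le_apply).trans (Nat.le_add_left _ _)))

theorem dv_complete {n : ℕ} {p : Seminorm ℝ (Fin n → ℝ)} (hp_eq0 : ∀ x, p x = 0 → x = 0)
    (hp : ∀ (σ : Equiv.Perm (Fin n)) (x : Fin n → ℝ), p (x ∘ σ) = p x)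
    {u : ℕ → Matrix (Fin n) (Fin n) ℂ} (hu : ∀ k, (u k).PosDef)
    (cauchy : ∀ ε > 0, ∃ N, ∀ k ≥ N, ∀ l ≥ N, dv p (u k) (u l) < ε) :
    ∃ L : Matrix (Fin n) (Fin n) ℂ, L.PosDef ∧ ∀ ε > 0, ∃ N, ∀ k ≥ N, dv p (u k) L < ε := by
  obtain ⟨C, C_pos, hC⟩ := exists_seminorm_le_mul_norm_and_norm_le_mul_seminorm hp_eq0
  obtain ⟨L, hL, limit⟩ := exists_posDef_thompson_limit hu fun ε hε => by
    obtain ⟨N, hN⟩ := cauchy (ε / C) (div_pos hε C_pos)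
    refine ⟨N, fun k hk l hl => ?_⟩
    obtain ⟨t, ht⟩ := HasRelativeLogSpectrum.exists_of_posDef (hu k) (hu l)
    have p_lt : p t < ε / C := ht.dv_eq hp ▸ hN k hk l hl
    exact (ht.mem_thompsonBall_iff hε.le).mpr
      ((hC t).2.trans ((lt_div_iff₀' C_pos).mp p_lt).le)
  refine ⟨L, hL, fun ε hε => ?_⟩
  obtain ⟨N, hN⟩ := limit (ε / 2 / C) (by positivity)
  refine ⟨N, fun k hk => ?_⟩
  obtain ⟨t, ht⟩ := HasRelativeLogSpectrum.exists_of_posDef (hu k) hL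
  have norm_le : ‖t‖ ≤ ε / 2 / C := (ht.mem_thompsonBall_iff (by positivity)).mp (hN k hk)
  calc dv p (u k) L = p t := ht.dv_eq hp
    _ ≤ C * ‖t‖ := (hC t).1
    _ ≤ ε / 2 := (le_div_iff₀' C_pos).mp norm_le
    _ < ε := half_lt_self hε

end Completeness

/-- `d_v` is a complete metric on the set of positive definite matrices, invariant in the
sense that `d_v(X,Y) = d_v(I, X^{-1/2} Y X^{-1/2})`. -/
theorem dv_is_complete_metric {n : ℕ} (v : (Fin n → ℝ) → ℝ)
    (hv_eq0 : ∀ x, v x = 0 ↔ x = 0)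
    (hv_smul : ∀ (c : ℝ) (x : Fin n → ℝ), v (c • x) = |c| * v x)
    (hv_add : ∀ x y, v (x + y) ≤ v x + v y)
    (hv_perm : ∀ (σ : Equiv.Perm (Fin n)) (x : Fin n → ℝ), v (x ∘ σ) = v x) :
    (∀ X Y : Matrix (Fin n) (Fin n) ℂ, X.PosDef → Y.PosDef → (dv v X Y = 0 ↔ X = Y))
      ∧ (∀ X Y : Matrix (Fin n) (Fin n) ℂ, X.PosDef → Y.PosDef → dv v X Y = dv v Y X)
      ∧ (∀ X Y Z : Matrix (Fin n) (Fin n) ℂ, X.PosDef → Y.PosDef → Z.PosDef →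
          dv v X Z ≤ dv v X Y + dv v Y Z)
      ∧ (∀ u : ℕ → Matrix (Fin n) (Fin n) ℂ, (∀ k, (u k).PosDef) →
          (∀ ε > (0 : ℝ), ∃ N, ∀ p ≥ N, ∀ q ≥ N, dv v (u p) (u q) < ε) →
          ∃ L : Matrix (Fin n) (Fin n) ℂ, L.PosDef ∧
            ∀ ε > (0 : ℝ), ∃ N, ∀ k ≥ N, dv v (u k) L < ε)
      ∧ (∀ X Y : Matrix (Fin n) (Fin n) ℂ, X.PosDef → Y.PosDef →
          dv v X Y = dv v 1 ((matSqrt X)⁻¹ * Y * (matSqrt X)⁻¹)) := by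
  let p : Seminorm ℝ (Fin n → ℝ) := Seminorm.of v hv_add hv_smul
  exact ⟨fun X Y => dv_eq_zero_iff hv_eq0 hv_perm, fun X Y => dv_comm (p := p) hv_perm,
    fun X Y Z => dv_triangle (p := p) hv_perm,
    fun u => dv_complete (p := p) (fun x => (hv_eq0 x).mp) hv_perm,
    fun X Y => dv_eq_dv_one hv_perm⟩
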